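/- Let (B, ν) be a probability space, H a real or complex Hilbert space, F : B → H a bounded strongly measurable function, and y ∈ H; for ε > 0 set E_ε = {b ∈ B : ‖F(b) − y‖ < ε}. Let (Sₙ) be a sequence of measurable bijections of B with measurable inverses, (Uₙ) a sequence of bounded linear operators on H, and (δₙ) a sequence of nonnegative reals with δₙ → 0 such that ‖Uₙ(F(b) − y)‖² ≤ ‖F(b) − y‖² + δₙ for every n and every b ∈ B. Assume: (i) for every ε > 0, ν(E_ε) > 0 and ν(E_ε ∩ {b : Sₙ⁻¹ b ∈ E_ε}) → ν(E_ε) as n → ∞; (ii) ∫_B ‖Uₙ(F(Sₙ⁻¹ b)) − F(b)‖² dν(b) → 0 as n → ∞. Then ‖Uₙ y − y‖ → 0. -/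

import Mathlib

open MeasureTheory Filter

/-- The main analytic step (almost-isometric case): if `y` is an essential value of the
bounded strongly measurable `F : B → H` in the strong sense (i), the operators `Uₙ` are
almost isometric on the range of `F - y` with defect `δₙ → 0`, and the twisted
differences (ii) tend to `0` in `L²`, then `‖Uₙ y - y‖ → 0`. -/
theorem stmt_4 {𝕜 : Type*} [RCLike 𝕜]
    {B : Type*} [MeasurableSpace B] (ν : Measure B) [IsProbabilityMeasure ν]
    {H : Type*} [NormedAddCommGroup H] [InnerProductSpace 𝕜 H] [CompleteSpace H]
    (F : B → H) (hF : StronglyMeasurable F) (hFbdd : ∃ C : ℝ, ∀ b, ‖F b‖ ≤ C)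
    (y : H) (S : ℕ → B ≃ᵐ B) (U : ℕ → H →L[𝕜] H)
    (δ : ℕ → ℝ) (hδ : ∀ n, 0 ≤ δ n) (hδ0 : Tendsto δ atTop (nhds 0))
    (hU : ∀ n, ∀ b, ‖(U n) (F b - y)‖ ^ 2 ≤ ‖F b - y‖ ^ 2 + δ n)
    (hi : ∀ ε : ℝ, 0 < ε →
      0 < ν {b | ‖F b - y‖ < ε} ∧
      Tendsto
        (fun n =>
          (ν ({b | ‖F b - y‖ < ε} ∩ {b | (S n).symm b ∈ {b | ‖F b - y‖ < ε}})).toReal)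
        atTop (nhds (ν {b | ‖F b - y‖ < ε}).toReal))
    (hii : Tendsto (fun n => ∫ b, ‖(U n) (F ((S n).symm b)) - F b‖ ^ 2 ∂ν)
      atTop (nhds 0)) :
    Tendsto (fun n => ‖(U n) y - y‖) atTop (nhds 0) := by
  obtain ⟨C, hC⟩ := hFbdd
  rw [Metric.tendsto_atTop']
  intro η hη
  obtain ⟨hpos, hlim⟩ := hi (η / 5) (by positivity)
  set E : Set B := {b | ‖F b - y‖ < η / 5} with hE
  have hEm : MeasurableSet E :=
    measurableSet_lt (hF.sub stronglyMeasurable_const).norm.measurable measurable_const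
  have hEpos : 0 < (ν E).toReal := ENNReal.toReal_pos hpos.ne' (measure_ne_top _ _)
  have e1 := hlim.eventually (lt_mem_nhds (half_lt_self hEpos))
  have e2 := hδ0.eventually (gt_mem_nhds (show (0 : ℝ) < η ^ 2 / 12 by positivity))
  have e3 := hii.eventually (gt_mem_nhds
    (show (0 : ℝ) < η ^ 2 / 12 * ((ν E).toReal / 2) by positivity))
  obtain ⟨N, hN⟩ := eventually_atTop.1 (e1.and (e2.and e3))
  refine ⟨N, fun n hn => ?_⟩
  obtain ⟨h1, h2, h3⟩ := hN n hn.le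
  set A : Set B := E ∩ {b | (S n).symm b ∈ E} with hA
  have hAm : MeasurableSet A := hEm.inter ((S n).symm.measurable hEm)
  have hgm : StronglyMeasurable (fun b => ‖(U n) (F ((S n).symm b)) - F b‖ ^ 2) :=
    ((((U n).continuous.comp_stronglyMeasurable
      (hF.comp_measurable (S n).symm.measurable)).sub hF).norm).pow 2
  have hgi : Integrable (fun b => ‖(U n) (F ((S n).symm b)) - F b‖ ^ 2) ν := by
    refine Integrable.of_bound hgm.aestronglyMeasurable ((‖U n‖ * C + C) ^ 2)
      (Eventually.of_forall fun b => ?_)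
    rw [Real.norm_of_nonneg (by positivity)]
    refine pow_le_pow_left₀ (norm_nonneg _) ?_ 2
    refine (norm_sub_le _ _).trans (add_le_add ?_ (hC b))
    exact ((U n).le_opNorm _).trans (mul_le_mul_of_nonneg_left (hC _) (norm_nonneg _))
  set c : ℝ := ‖(U n) y - y‖ ^ 2 / 3 - 2 * (η / 5) ^ 2 - δ n with hc
  have key : ∀ b ∈ A, c ≤ ‖(U n) (F ((S n).symm b)) - F b‖ ^ 2 := by
    intro b hb
    have hb1 : ‖F b - y‖ < η / 5 := hb.1
    have hb2 : ‖F ((S n).symm b) - y‖ < η / 5 := hb.2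
    have hu := hU n ((S n).symm b)
    have q1 := pow_le_pow_left₀ (norm_nonneg _) hb1.le 2
    have q2 := pow_le_pow_left₀ (norm_nonneg _) hb2.le 2
    have tri : ‖(U n) y - y‖ ≤ ‖(U n) (F ((S n).symm b) - y)‖
        + ‖(U n) (F ((S n).symm b)) - F b‖ + ‖F b - y‖ := by
      have : (U n) y - y = -(U n) (F ((S n).symm b) - y)
          + ((U n) (F ((S n).symm b)) - F b) + (F b - y) := by
        rw [map_sub]; abel
      rw [this]
      refine norm_add₃_le.trans ?_
      rw [norm_neg]
    have t2 := pow_le_pow_left₀ (norm_nonneg _) tri 2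
    rw [hc]
    generalize ‖(U n) (F ((S n).symm b) - y)‖ = p at *
    generalize ‖(U n) (F ((S n).symm b)) - F b‖ = q at *
    generalize ‖F b - y‖ = r at *
    nlinarith [sq_nonneg (p - q), sq_nonneg (q - r), sq_nonneg (p - r)]
  have hint : c * (ν A).toReal ≤ ∫ b, ‖(U n) (F ((S n).symm b)) - F b‖ ^ 2 ∂ν := by
    calc c * (ν A).toReal = ∫ _ in A, c ∂ν := by
          rw [setIntegral_const, smul_eq_mul, mul_comm]; rfl
      _ ≤ ∫ b in A, ‖(U n) (F ((S n).symm b)) - F b‖ ^ 2 ∂ν :=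
          setIntegral_mono_on (integrable_const c) hgi.integrableOn hAm key
      _ ≤ _ := setIntegral_le_integral hgi (Eventually.of_forall fun b => by positivity)
  have hclt : c < η ^ 2 / 12 := by
    have hApos : 0 < (ν A).toReal := by linarith
    have : c * (ν A).toReal < η ^ 2 / 12 * (ν A).toReal := by
      have : η ^ 2 / 12 * ((ν E).toReal / 2) ≤ η ^ 2 / 12 * (ν A).toReal :=
        mul_le_mul_of_nonneg_left h1.le (by positivity)
      linarith
    exact lt_of_mul_lt_mul_right this hApos.le
  rw [dist_zero_right, norm_norm]
  refine lt_of_pow_lt_pow_left₀ 2 hη.le ?_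
  rw [hc] at hclt
  nlinarith [pow_pos hη 2]
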